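/- For every positive integer n, the number of n×n partial Latin rectangles based on n symbols of size 6 satisfies 720·|R_{n,n,n:6}| = n³·(n−1)²·(n−2)²·(n¹¹ + 6n¹⁰ − 22n⁹ − 168n⁸ + 231n⁷ + 2022n⁶ − 2014n⁵ − 12606n⁴ + 16168n³ + 32250n² − 70740n + 36600). -/

import Mathlib

open Finset

/-- `E` is (the entry set of) an `r × s` partial Latin rectangle based on `n` symbols:
no two distinct triples agree in both their first and second coordinates, in both their
first and third coordinates, or in both their second and third coordinates. -/
def IsPLR {r s n : ℕ} (E : Finset (Fin r × Fin s × Fin n)) : Prop :=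
  ∀ e ∈ E, ∀ e' ∈ E, e ≠ e' →
    ¬(e.1 = e'.1 ∧ e.2.1 = e'.2.1) ∧
    ¬(e.1 = e'.1 ∧ e.2.2 = e'.2.2) ∧
    ¬(e.2.1 = e'.2.1 ∧ e.2.2 = e'.2.2)

/-- The number of entries of `E` in row `i`. -/
def rowType {r s n : ℕ} (E : Finset (Fin r × Fin s × Fin n)) (i : Fin r) : ℕ :=
  (E.filter (fun e => e.1 = i)).card

/-- The number of entries of `E` in column `j`. -/
def colType {r s n : ℕ} (E : Finset (Fin r × Fin s × Fin n)) (j : Fin s) : ℕ :=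
  (E.filter (fun e => e.2.1 = j)).card

/-- The number of occurrences of symbol `k` in `E`. -/
def symType {r s n : ℕ} (E : Finset (Fin r × Fin s × Fin n)) (k : Fin n) : ℕ :=
  (E.filter (fun e => e.2.2 = k)).card

/-- The number of `r × s` partial Latin rectangles based on `n` symbols of size `m`. -/
noncomputable def numPLR (r s n m : ℕ) : ℕ :=
  Nat.card {E : Finset (Fin r × Fin s × Fin n) // IsPLR E ∧ E.card = m}

/-!
Listing the `m` cells of a partial Latin rectangle in the `m!` possible orders turns it into
sequences of cells, that is, into triples of functions giving their rows, columns and symbols. The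
cells are distinct and form a partial Latin rectangle exactly when the kernels of the three
functions are pairwise disjoint as partitions of the `m` positions. A partition into `a` blocks is
the kernel of `n (n - 1) ⋯ (n - a + 1)` functions to an `n`-element set, so `m!` times the number
of partial Latin rectangles is a combination of products of three falling factorials. The
coefficients do not depend on `n`: they count the pairwise disjoint triples of partitions with
given numbers of blocks, and for `m = 6` this is a finite computation.
-/

open scoped Nat

section Enumerations

variable {ι X : Type*} [Fintype ι]

theorem map_univ_eq_iff_forall_mem {e : ι ↪ X} {E : Finset X} (hE : #E = Fintype.card ι) :
    univ.map e = E ↔ ∀ i, e i ∈ E := by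
  refine ⟨fun h i => h ▸ mem_map_of_mem e (mem_univ i), fun h => ?_⟩
  refine eq_of_subset_of_card_le (fun x hx => ?_) (by rw [card_map, card_univ, hE])
  obtain ⟨i, -, rfl⟩ := mem_map.1 hx
  exact h i

theorem card_embedding_map_univ_eq {E : Finset X} (hE : #E = Fintype.card ι) :
    Nat.card {e : ι ↪ X // univ.map e = E} = (#E)! := by
  classical
  let toEmbeddingIn : {e : ι ↪ X // univ.map e = E} ≃ (ι ↪ E) :=
    { toFun := fun e => e.1.codRestrict E ((map_univ_eq_iff_forall_mem hE).1 e.2)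
      invFun := fun e => ⟨e.trans (.subtype _),
        (map_univ_eq_iff_forall_mem hE).2 fun i => (e i).2⟩
      left_inv := fun _ => rfl
      right_inv := fun _ => rfl }
  rw [Nat.card_congr toEmbeddingIn, Nat.card_eq_fintype_card, Fintype.card_embedding_eq,
    Fintype.card_coe, ← hE, Nat.descFactorial_self]

theorem card_embedding_map_univ [Finite X] (p : Finset X → Prop) :
    Nat.card {e : ι ↪ X // p (univ.map e)} =
      (Fintype.card ι)! * Nat.card {E : Finset X // p E ∧ #E = Fintype.card ι} := by
  classical
  have := Fintype.ofFinite X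
  let sigmaFiberEquiv : {e : ι ↪ X // p (univ.map e)} ≃
      Σ E : {E : Finset X // p E ∧ #E = Fintype.card ι}, {e : ι ↪ X // univ.map e = E} :=
    { toFun := fun e => ⟨⟨univ.map e.1, e.2, by rw [card_map, card_univ]⟩, e.1, rfl⟩
      invFun := fun e => ⟨e.2.1, e.2.2.symm ▸ e.1.2.1⟩
      left_inv := fun _ => rfl
      right_inv := by
        rintro ⟨⟨E, hE⟩, e, he⟩
        dsimp only at he
        subst he
        rfl }
  rw [Nat.card_congr sigmaFiberEquiv, Nat.card_sigma, mul_comm, Nat.card_eq_fintype_card,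
    ← smul_eq_mul, ← Finset.card_univ]
  exact sum_eq_card_nsmul fun E _ => by rw [card_embedding_map_univ_eq E.2.2, E.2.2]

end Enumerations

section Kernels

variable {ι α β : Type*}

theorem disjoint_ker_iff {f : ι → α} {g : ι → β} :
    Disjoint (Setoid.ker f) (Setoid.ker g) ↔ ∀ i j, i ≠ j → ¬(f i = f j ∧ g i = g j) := by
  rw [disjoint_iff_inf_le]
  exact ⟨fun h i j hij hfg => hij (h hfg), fun h i j hfg => by_contra fun hij => h i j hij hfg⟩

/-- The functions with kernel `P` are the injections of the set of blocks of `P`. -/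
def kerEqEquivEmbedding (P : Setoid ι) (β : Type*) :
    {f : ι → β // Setoid.ker f = P} ≃ (Quotient P ↪ β) where
  toFun f := ⟨Quotient.lift f.1 f.2.ge, (Setoid.lift_injective_iff_ker_eq_of_le _).2 f.2⟩
  invFun e := ⟨fun i => e ⟦i⟧, by ext; simp [Setoid.ker_def, Quotient.eq]⟩
  left_inv _ := rfl
  right_inv e := by
    ext ⟨i⟩
    rfl

theorem card_ker_eq_ker [Fintype ι] [Fintype β] [DecidableEq α] (c : ι → α) :
    Nat.card {f : ι → β // Setoid.ker f = Setoid.ker c} =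
      (Fintype.card β).descFactorial #(univ.image c) := by
  classical
  have card_quotient : Fintype.card (Quotient (Setoid.ker c)) = #(univ.image c) := by
    rw [Fintype.card_congr (Setoid.quotientKerEquivRange c), ← Set.toFinset_card,
      Set.toFinset_range]
  rw [Nat.card_congr (kerEqEquivEmbedding _ β), Nat.card_eq_fintype_card,
    Fintype.card_embedding_eq, card_quotient]

theorem le_of_ker_le [Preorder ι] {c d : ι → ι} (hc : ∀ i, c i ≤ i) (hd : ∀ i, d (d i) = d i)
    (h : Setoid.ker d ≤ Setoid.ker c) (i : ι) : c i ≤ d i :=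
  calc c i = c (d i) := h (hd i).symm
    _ ≤ d i := hc (d i)

end Kernels

section LeastRepresentatives

variable {ι β : Type*} [Fintype ι] [LinearOrder ι]

section LeastRep

variable [DecidableEq β]

/-- The map sending `i` to the least element of its fibre under `f`. It is the normal form of `f`
among the functions with the same kernel. -/
def leastRep (f : ι → β) (i : ι) : ι :=
  ({j | f j = f i} : Finset ι).min' ⟨i, by simp⟩

theorem apply_leastRep (f : ι → β) (i : ι) : f (leastRep f i) = f i :=
  (mem_filter.1 (min'_mem ({j | f j = f i} : Finset ι) _)).2

theorem leastRep_le (f : ι → β) (i : ι) : leastRep f i ≤ i :=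
  min'_le _ _ (by simp)

theorem leastRep_eq_leastRep_iff {f : ι → β} {i j : ι} :
    leastRep f i = leastRep f j ↔ f i = f j := by
  refine ⟨fun h => ?_, fun h => by simp only [leastRep, h]⟩
  rw [← apply_leastRep f i, h, apply_leastRep f j]

theorem ker_leastRep (f : ι → β) : Setoid.ker (leastRep f) = Setoid.ker f :=
  Setoid.ext fun _ _ => leastRep_eq_leastRep_iff

end LeastRep

variable [LocallyFiniteOrderBot ι]

variable (ι) in
/-- The maps sending every point to the least element of its block, for some partition of `ι`;
they encode the partitions of `ι`. -/
def leastRepMaps : Finset (ι → ι) :=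
  {c ∈ Fintype.piFinset fun i => Iic i | ∀ i, c (c i) = c i}

theorem mem_leastRepMaps {c : ι → ι} :
    c ∈ leastRepMaps ι ↔ (∀ i, c i ≤ i) ∧ ∀ i, c (c i) = c i := by
  simp [leastRepMaps]

theorem leastRep_mem_leastRepMaps [DecidableEq β] (f : ι → β) : leastRep f ∈ leastRepMaps ι :=
  mem_leastRepMaps.2
    ⟨leastRep_le f, fun i => leastRep_eq_leastRep_iff.2 (apply_leastRep f i)⟩

theorem ker_injOn_leastRepMaps : Set.InjOn Setoid.ker (leastRepMaps ι : Set (ι → ι)) := by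
  intro c hc d hd h
  rw [mem_coe, mem_leastRepMaps] at hc hd
  exact funext fun i =>
    (le_of_ker_le hc.1 hd.2 h.ge i).antisymm (le_of_ker_le hd.1 hc.2 h.le i)

theorem leastRep_eq_iff [DecidableEq β] {f : ι → β} {c : ι → ι} (hc : c ∈ leastRepMaps ι) :
    leastRep f = c ↔ Setoid.ker f = Setoid.ker c := by
  rw [← ker_leastRep f]
  exact (ker_injOn_leastRepMaps.eq_iff (leastRep_mem_leastRepMaps f) hc).symm

theorem sum_leastRep_eq_comp_ker [Fintype β] [DecidableEq β] {M : Type*} [AddCommMonoid M]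
    (G : Setoid ι → M) {c : ι → ι} (hc : c ∈ leastRepMaps ι) :
    ∑ f : ι → β with leastRep f = c, G (Setoid.ker f) =
      (Fintype.card β).descFactorial #(univ.image c) • G (Setoid.ker c) := by
  rw [← card_ker_eq_ker, ← Nat.card_congr (Equiv.subtypeEquivRight fun _ => leastRep_eq_iff hc),
    Nat.card_eq_fintype_card, Fintype.card_subtype]
  exact sum_eq_card_nsmul fun f hf => by rw [(leastRep_eq_iff hc).1 (mem_filter.1 hf).2]

theorem sum_comp_ker [Fintype β] {M : Type*} [AddCommMonoid M] (G : Setoid ι → M) :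
    ∑ f : ι → β, G (Setoid.ker f) =
      ∑ c ∈ leastRepMaps ι, (Fintype.card β).descFactorial #(univ.image c) • G (Setoid.ker c) := by
  classical
  rw [← sum_fiberwise_of_maps_to fun f _ => leastRep_mem_leastRepMaps f]
  exact sum_congr rfl fun c hc => sum_leastRep_eq_comp_ker G hc

end LeastRepresentatives

section DisjointTriple

/-- `x`, `y` and `z` are pairwise disjoint. The kernels of the row, column and symbol coordinates of
a sequence of cells have this property exactly when the cells are distinct and form a partial Latin
rectangle. -/
def DisjointTriple {L : Type*} [PartialOrder L] [OrderBot L] (x y z : L) : Prop :=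
  Disjoint x y ∧ Disjoint x z ∧ Disjoint y z

theorem isPLR_map_univ_iff {ι : Type*} [Fintype ι] {r s n : ℕ} {e : ι ↪ Fin r × Fin s × Fin n} :
    IsPLR (univ.map e) ↔ DisjointTriple (Setoid.ker fun i => (e i).1)
      (Setoid.ker fun i => (e i).2.1) (Setoid.ker fun i => (e i).2.2) := by
  simp only [IsPLR, DisjointTriple, disjoint_ker_iff, mem_map, mem_univ, true_and,
    forall_exists_index, forall_apply_eq_imp_iff, e.injective.ne_iff]
  grind

/-- The sequences of distinct cells forming a partial Latin rectangle, in terms of their row,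
column and symbol coordinates. -/
def isPLREquivDisjointTriple (ι : Type*) [Fintype ι] (r s n : ℕ) :
    {e : ι ↪ Fin r × Fin s × Fin n // IsPLR (univ.map e)} ≃
      {t : (ι → Fin r) × (ι → Fin s) × (ι → Fin n) //
        DisjointTriple (Setoid.ker t.1) (Setoid.ker t.2.1) (Setoid.ker t.2.2)} where
  toFun e := ⟨(fun i => (e.1 i).1, fun i => (e.1 i).2.1, fun i => (e.1 i).2.2),
    isPLR_map_univ_iff.1 e.2⟩
  invFun t := ⟨⟨fun i => (t.1.1 i, t.1.2.1 i, t.1.2.2 i), fun i j h => by_contra fun hij =>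
      disjoint_ker_iff.1 t.2.1 i j hij (by simp_all)⟩,
    isPLR_map_univ_iff.2 t.2⟩
  left_inv _ := rfl
  right_inv _ := rfl

theorem sum_sum_sum_comp_ker {ι α β γ R : Type*} [Fintype ι] [LinearOrder ι]
    [LocallyFiniteOrderBot ι] [Fintype α] [Fintype β] [Fintype γ] [Semiring R]
    (G : Setoid ι → Setoid ι → Setoid ι → R) :
    ∑ f : ι → α, ∑ g : ι → β, ∑ h : ι → γ, G (Setoid.ker f) (Setoid.ker g) (Setoid.ker h) =
      ∑ p ∈ leastRepMaps ι, ∑ q ∈ leastRepMaps ι, ∑ r ∈ leastRepMaps ι,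
        ((Fintype.card α).descFactorial #(univ.image p) *
          (Fintype.card β).descFactorial #(univ.image q) *
          (Fintype.card γ).descFactorial #(univ.image r) : ℕ) *
        G (Setoid.ker p) (Setoid.ker q) (Setoid.ker r) := by
  rw [sum_comp_ker fun x => ∑ g : ι → β, ∑ h : ι → γ, G x (Setoid.ker g) (Setoid.ker h)]
  refine sum_congr rfl fun p _ => ?_
  rw [sum_comp_ker fun y => ∑ h : ι → γ, G (Setoid.ker p) y (Setoid.ker h), smul_sum]
  refine sum_congr rfl fun q _ => ?_
  simp only [sum_comp_ker, nsmul_eq_mul, mul_sum, mul_assoc, Nat.cast_mul]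

open Classical in
/-- The pairwise disjoint triples of partitions of `Fin m`, encoded by their least
representatives. -/
noncomputable def disjointLeastRepTriples (m : ℕ) :
    Finset ((Fin m → Fin m) × (Fin m → Fin m) × (Fin m → Fin m)) :=
  {t ∈ leastRepMaps (Fin m) ×ˢ leastRepMaps (Fin m) ×ˢ leastRepMaps (Fin m) |
    DisjointTriple (Setoid.ker t.1) (Setoid.ker t.2.1) (Setoid.ker t.2.2)}

theorem mem_disjointLeastRepTriples {m : ℕ} {p q r : Fin m → Fin m} :
    (p, q, r) ∈ disjointLeastRepTriples m ↔
      (p ∈ leastRepMaps (Fin m) ∧ q ∈ leastRepMaps (Fin m) ∧ r ∈ leastRepMaps (Fin m)) ∧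
        DisjointTriple (Setoid.ker p) (Setoid.ker q) (Setoid.ker r) := by
  simp only [disjointLeastRepTriples, mem_filter, mem_product]

theorem card_disjointTriple_ker {m : ℕ} {α β γ : Type*} [Fintype α] [Fintype β] [Fintype γ] :
    Nat.card {t : (Fin m → α) × (Fin m → β) × (Fin m → γ) //
        DisjointTriple (Setoid.ker t.1) (Setoid.ker t.2.1) (Setoid.ker t.2.2)} =
      ∑ t ∈ disjointLeastRepTriples m,
        (Fintype.card α).descFactorial #(univ.image t.1) *
        (Fintype.card β).descFactorial #(univ.image t.2.1) *
        (Fintype.card γ).descFactorial #(univ.image t.2.2) := by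
  classical
  rw [Nat.card_eq_fintype_card, Fintype.card_subtype, card_filter, disjointLeastRepTriples,
    sum_filter]
  simp only [Fintype.sum_prod_type, sum_product]
  convert sum_sum_sum_comp_ker (α := α) (β := β) (γ := γ) fun x y z : Setoid (Fin m) =>
    if DisjointTriple x y z then 1 else 0
  simp

/-- The number of pairwise disjoint triples of partitions of `Fin m` into `a`, `b` and `c` blocks,
respectively. -/
noncomputable def disjointTripleCount (m a b c : ℕ) : ℕ :=
  #{t ∈ disjointLeastRepTriples m |
    (#(univ.image t.1), #(univ.image t.2.1), #(univ.image t.2.2)) = (a, b, c)}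

theorem factorial_mul_numPLR (r s n m : ℕ) :
    m ! * numPLR r s n m = ∑ a ∈ range (m + 1), ∑ b ∈ range (m + 1), ∑ c ∈ range (m + 1),
      disjointTripleCount m a b c *
        (r.descFactorial a * s.descFactorial b * n.descFactorial c) := by
  have card_image_mem (c : Fin m → Fin m) : #(univ.image c) ∈ range (m + 1) :=
    mem_range_succ_iff.2 (card_image_le.trans_eq (card_fin m))
  have card_images_mem t (_ : t ∈ disjointLeastRepTriples m) :
      (#(univ.image t.1), #(univ.image t.2.1), #(univ.image t.2.2)) ∈
        range (m + 1) ×ˢ range (m + 1) ×ˢ range (m + 1) := by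
    simp only [mem_product, card_image_mem, and_self]
  have card_sequences := card_embedding_map_univ (ι := Fin m) (IsPLR (r := r) (s := s) (n := n))
  rw [Fintype.card_fin] at card_sequences
  rw [numPLR, ← card_sequences, Nat.card_congr (isPLREquivDisjointTriple _ r s n),
    card_disjointTriple_ker, ← sum_fiberwise_of_maps_to card_images_mem]
  simp only [sum_product, Fintype.card_fin]
  refine sum_congr rfl fun a _ => sum_congr rfl fun b _ => sum_congr rfl fun c _ => ?_
  refine sum_const_nat fun t ht => ?_
  obtain ⟨-, ⟨⟩⟩ := mem_filter.1 ht
  rfl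

theorem disjointTripleCount_swap_left (m a b c : ℕ) :
    disjointTripleCount m b a c = disjointTripleCount m a b c := by
  refine card_nbij' (fun t => (t.2.1, t.1, t.2.2)) (fun t => (t.2.1, t.1, t.2.2)) ?_ ?_
    (fun _ _ => rfl) (fun _ _ => rfl) <;>
  · rintro ⟨p, q, r⟩
    simp only [coe_filter, Set.mem_ofPred_eq, mem_disjointLeastRepTriples, DisjointTriple,
      Prod.mk.injEq, disjoint_comm]
    tauto

theorem disjointTripleCount_swap_right (m a b c : ℕ) :
    disjointTripleCount m a c b = disjointTripleCount m a b c := by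
  refine card_nbij' (Prod.map id Prod.swap) (Prod.map id Prod.swap) ?_ ?_
    (fun _ _ => rfl) (fun _ _ => rfl) <;>
  · rintro ⟨p, q, r⟩
    simp only [coe_filter, Set.mem_ofPred_eq, mem_disjointLeastRepTriples, DisjointTriple,
      Prod.mk.injEq, disjoint_comm, Prod.map, Prod.swap]
    tauto

end DisjointTriple

section KerMask

variable {m : ℕ} {α β : Type*} [DecidableEq α] [DecidableEq β]

theorem ofBits_land_ofBits_eq_zero_iff {k : ℕ} {u v : Fin k → Bool} :
    Nat.ofBits u &&& Nat.ofBits v = 0 ↔ ∀ i, ¬(u i ∧ v i) := by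
  refine ⟨fun h i => ?_, fun h => Nat.eq_of_testBit_eq fun j => ?_⟩
  · simpa [Nat.testBit_ofBits_lt _ _ i.2] using congrArg (Nat.testBit · i) h
  · obtain hj | hj := lt_or_ge j k
    · simpa [Nat.testBit_ofBits_lt _ _ hj] using h ⟨j, hj⟩
    · simp [Nat.testBit_ofBits_ge _ _ hj]

/-- The kernel of `f` as a bit set: the `k`-th bit is set if `k` encodes a pair of distinct points
with the same image. Disjointness of kernels becomes a single operation on natural numbers, which
makes the enumeration of disjoint kernels feasible. -/
def kerMask (f : Fin m → β) : ℕ :=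
  Nat.ofBits (n := m * m) fun k => decide (k.divNat ≠ k.modNat ∧ f k.divNat = f k.modNat)

theorem kerMask_land_kerMask_eq_zero_iff {f : Fin m → α} {g : Fin m → β} :
    kerMask f &&& kerMask g = 0 ↔ Disjoint (Setoid.ker f) (Setoid.ker g) := by
  rw [kerMask, kerMask, ofBits_land_ofBits_eq_zero_iff, disjoint_ker_iff, ← Prod.forall',
    finProdFinEquiv.symm.surjective.forall]
  refine forall_congr' fun k => ?_
  simp only [finProdFinEquiv_symm_apply, decide_eq_true_eq]
  tauto

end KerMask

section Evaluation

/-- The encodings in `leastRepMaps (Fin m)` of the partitions of `Fin m` into `a` blocks. -/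
def leastRepMapsOfCard (m a : ℕ) : Finset (Fin m → Fin m) :=
  {c ∈ leastRepMaps (Fin m) | #(univ.image c) = a}

theorem list_rec_add_eq_sum_map {α : Type*} (f : α → ℕ) (l : List α) :
    List.rec (motive := fun _ => ℕ) 0 (fun x _ t => f x + t) l = (l.map f).sum := by
  induction l with
  | nil => rfl
  | cons x l ih => rw [List.map_cons, List.sum_cons, ← ih]

/-- The sum of `f` over `s`. The direct use of `List.rec` lets the kernel evaluate nested sums, for
which the recursion behind `Finset.sum` is too slow. -/
def recSum {α : Type*} (s : Finset α) (f : α → ℕ) : ℕ :=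
  Quot.lift (fun l : List α => List.rec (motive := fun _ => ℕ) 0 (fun x _ t => f x + t) l)
    (fun l l' h => by simpa only [list_rec_add_eq_sum_map] using (h.map f).sum_eq) s.val

theorem recSum_eq_sum {α : Type*} (s : Finset α) (f : α → ℕ) : recSum s f = ∑ x ∈ s, f x := by
  obtain ⟨⟨l⟩, _⟩ := s
  exact list_rec_add_eq_sum_map f l

open Classical in
theorem one_sub_lor_kerMask_land_kerMask {m : ℕ} (p q r : Fin m → Fin m) :
    1 - ((kerMask p ||| kerMask q) &&& kerMask r) =
      if Disjoint (Setoid.ker p) (Setoid.ker r) ∧ Disjoint (Setoid.ker q) (Setoid.ker r)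
        then 1 else 0 := by
  have lor_land_eq_zero_iff : (kerMask p ||| kerMask q) &&& kerMask r = 0 ↔
      Disjoint (Setoid.ker p) (Setoid.ker r) ∧ Disjoint (Setoid.ker q) (Setoid.ker r) := by
    rw [Nat.and_or_distrib_right, Nat.or_eq_zero_iff, kerMask_land_kerMask_eq_zero_iff,
      kerMask_land_kerMask_eq_zero_iff]
  simp only [← lor_land_eq_zero_iff]
  split_ifs <;> omega

-- `Nat.sub`, `Nat.land` and `Nat.lor` are written out because unfolding the instances behind their
-- notations would take up much of the kernel's evaluation.
theorem disjointTripleCount_eq_recSum (m a b c : ℕ) :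
    disjointTripleCount m a b c =
      recSum (leastRepMapsOfCard m a) fun p =>
        recSum (leastRepMapsOfCard m b) fun q =>
          if kerMask p &&& kerMask q = 0 then
            recSum (leastRepMapsOfCard m c) fun r =>
              Nat.sub 1 (Nat.land (Nat.lor (kerMask p) (kerMask q)) (kerMask r))
          else 0 := by
  classical
  have filter_eq : {t ∈ disjointLeastRepTriples m |
        (#(univ.image t.1), #(univ.image t.2.1), #(univ.image t.2.2)) = (a, b, c)} =
      {t ∈ leastRepMapsOfCard m a ×ˢ leastRepMapsOfCard m b ×ˢ leastRepMapsOfCard m c |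
        DisjointTriple (Setoid.ker t.1) (Setoid.ker t.2.1) (Setoid.ker t.2.2)} := by
    ext ⟨p, q, r⟩
    simp only [mem_filter, mem_disjointLeastRepTriples, leastRepMapsOfCard, mem_product,
      Prod.mk.injEq]
    tauto
  rw [disjointTripleCount, filter_eq, card_filter]
  simp only [sum_product, recSum_eq_sum, kerMask_land_kerMask_eq_zero_iff]
  refine sum_congr rfl fun p _ => sum_congr rfl fun q _ => ?_
  split_ifs with hpq
  · refine sum_congr rfl fun r _ => ?_
    simp only [DisjointTriple, hpq, true_and]
    exact (one_sub_lor_kerMask_land_kerMask p q r).symm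
  · simp [DisjointTriple, hpq]

theorem eq_of_swap_invariant {α β : Type*} [LinearOrder α] {f g : α → α → α → β}
    (f_left : ∀ a b c, f b a c = f a b c) (f_right : ∀ a b c, f a c b = f a b c)
    (g_left : ∀ a b c, g b a c = g a b c) (g_right : ∀ a b c, g a c b = g a b c)
    (h : ∀ a b c, a ≤ b → b ≤ c → f a b c = g a b c) (a b c : α) : f a b c = g a b c := by
  rcases le_total a b with hab | hab <;> rcases le_total a c with hac | hac <;>
    rcases le_total b c with hbc | hbc <;> grind

/-- The values of `disjointTripleCount 6`, indexed by the numbers of blocks. A `0` in place of an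
array is the zero function. -/
def disjointTripleTable : Fin 7 → Fin 7 → Fin 7 → ℕ :=
  ![0,
    ![0, 0, 0, 0, 0, 0,
      ![0, 0, 0, 0, 0, 0, 1]],
    ![0, 0, 0,
      ![0, 0, 0, 120, 540, 360, 60],
      ![0, 0, 0, 540, 3240, 2340, 360],
      ![0, 0, 0, 360, 2340, 1680, 240],
      ![0, 0, 0, 60, 360, 240, 31]],
    ![0, 0,
      ![0, 0, 0, 120, 540, 360, 60],
      ![0, 0, 120, 7680, 21120, 11880, 1560],
      ![0, 0, 540, 21120, 47910, 23040, 2610],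
      ![0, 0, 360, 11880, 23040, 9660, 975],
      ![0, 0, 60, 1560, 2610, 975, 90]],
    ![0, 0,
      ![0, 0, 0, 540, 3240, 2340, 360],
      ![0, 0, 540, 21120, 47910, 23040, 2610],
      ![0, 0, 3240, 47910, 76950, 29430, 2810],
      ![0, 0, 2340, 23040, 29430, 9660, 825],
      ![0, 0, 360, 2610, 2810, 825, 65]],
    ![0, 0,
      ![0, 0, 0, 360, 2340, 1680, 240],
      ![0, 0, 360, 11880, 23040, 9660, 975],
      ![0, 0, 2340, 23040, 29430, 9660, 825],
      ![0, 0, 1680, 9660, 9660, 2730, 210],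
      ![0, 0, 240, 975, 825, 210, 15]],
    ![0,
      ![0, 0, 0, 0, 0, 0, 1],
      ![0, 0, 0, 60, 360, 240, 31],
      ![0, 0, 60, 1560, 2610, 975, 90],
      ![0, 0, 360, 2610, 2810, 825, 65],
      ![0, 0, 240, 975, 825, 210, 15],
      ![0, 1, 31, 90, 65, 15, 1]]]

theorem disjointTripleTable_swap_left :
    ∀ a b c, disjointTripleTable b a c = disjointTripleTable a b c := by
  decide

theorem disjointTripleTable_swap_right :
    ∀ a b c, disjointTripleTable a c b = disjointTripleTable a b c := by
  decide

set_option maxRecDepth 100000 in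
theorem disjointTripleCount_six_of_le (a b c : Fin 7) (hab : a ≤ b) (hbc : b ≤ c) :
    disjointTripleCount 6 a b c = disjointTripleTable a b c := by
  simp only [disjointTripleCount_eq_recSum]
  revert a b c
  decide +kernel

theorem disjointTripleCount_six (a b c : Fin 7) :
    disjointTripleCount 6 a b c = disjointTripleTable a b c :=
  eq_of_swap_invariant (f := fun a b c : Fin 7 => disjointTripleCount 6 a b c)
    (fun _ _ _ => disjointTripleCount_swap_left ..) (fun _ _ _ => disjointTripleCount_swap_right ..)
    disjointTripleTable_swap_left disjointTripleTable_swap_right disjointTripleCount_six_of_le a b c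

end Evaluation

theorem cast_descFactorial_eq_prod (R : Type*) [CommRing R] (n k : ℕ) :
    (n.descFactorial k : R) = ∏ j ∈ range k, ((n : R) - j) := by
  rw [← descPochhammer_eval_eq_descFactorial, descPochhammer_eval_eq_prod_range]

theorem stmt13 (n : ℕ) (hn : 0 < n) :
    (720 : ℤ) * numPLR n n n 6 = (n : ℤ) ^ 3 * ((n : ℤ) - 1) ^ 2 * ((n : ℤ) - 2) ^ 2 * ((n : ℤ) ^ 11 + 6 * (n : ℤ) ^ 10 - 22 * (n : ℤ) ^ 9 - 168 * (n : ℤ) ^ 8 + 231 * (n : ℤ) ^ 7 + 2022 * (n : ℤ) ^ 6 - 2014 * (n : ℤ) ^ 5 - 12606 * (n : ℤ) ^ 4 + 16168 * (n : ℤ) ^ 3 + 32250 * (n : ℤ) ^ 2 - 70740 * (n : ℤ) + 36600) := by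
  have count : (720 : ℤ) * numPLR n n n 6 = ∑ a : Fin 7, ∑ b : Fin 7, ∑ c : Fin 7,
      (disjointTripleTable a b c : ℤ) *
        ((∏ i ∈ range a, ((n : ℤ) - i)) * (∏ i ∈ range b, ((n : ℤ) - i)) *
          ∏ i ∈ range c, ((n : ℤ) - i)) := by
    have := congrArg (Nat.cast : ℕ → ℤ) (factorial_mul_numPLR n n n 6)
    rw [show 6 ! = 720 from rfl] at this
    simpa only [sum_range, disjointTripleCount_six, Nat.cast_mul, Nat.cast_sum, Nat.cast_ofNat,
      cast_descFactorial_eq_prod] using this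
  rw [count]
  generalize (n : ℤ) = x
  simp only [Fin.sum_univ_succ, Fin.val_succ, Fin.val_zero, disjointTripleTable, prod_range_succ,
    prod_range_zero, Matrix.cons_val_zero, Matrix.cons_val_succ, univ_unique, sum_singleton,
    Fin.default_eq_zero, Pi.zero_apply]
  push_cast
  ring
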